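/- arXiv:1802.05990 — 3 statements merged into one kernel-verified Lean document; each statement's English description precedes it below -/
import Mathlib

section
/- For all positive integers n, the determinant of the n×n Hankel matrix whose (i,j) entry is binomial(i+j+1, floor((i+j+1)/2)) equals (-1)^{floor(n/2)}. -/
/-! Count lattice paths on `ℕ` with steps `-1, 0, 1`, where a level step at height `k` has weight
`b k`, and let `A` be the lower unitriangular array of weighted counts `a i k` of paths of length
`i` from `0` to `k`. Cutting a path that returns to `0` after its first `i` steps gives
`∑ k, a i k * a j k = a (i + j) 0`, while appending a step is right multiplication by the
tridiagonal step matrix `J`. Hence the shifted Hankel matrix `(a (i + j + 1) 0)` is `A * J * Aᵀ`,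
and its determinant is `det J`. If the only level step is at height `0`, with weight `1`, then
`a i k = i.choose ((i + k + 1) / 2)` and `d n = det J` obeys `d (n + 2) = -d n`. -/

open Finset Matrix

section Semiring

variable {R : Type*} [Semiring R] (b : ℕ → R)

/-- The total weight of the Motzkin paths of a given length from height `0` to a given height,
where up and down steps have weight `1` and a level step at height `k` has weight `b k`.
The recursion removes the last step. The values `motzkinWeight b i 0` are Aigner's Catalan-like
numbers. -/
def motzkinWeight : ℕ → ℕ → R
  | 0, 0 => 1
  | 0, _ + 1 => 0
  | i + 1, 0 => motzkinWeight i 0 * b 0 + motzkinWeight i 1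
  | i + 1, k + 1 =>
    motzkinWeight i k + motzkinWeight i (k + 1) * b (k + 1) + motzkinWeight i (k + 2)

/-- The square array of Motzkin path weights, with rows indexed by length and columns by height. -/
def motzkinMatrix (n : ℕ) : Matrix (Fin n) (Fin n) R :=
  of fun i k => motzkinWeight b i k

/-- The transfer matrix of Motzkin paths confined to heights below `n`: the Jacobi matrix with
diagonal `b` and off-diagonal entries `1`. -/
def motzkinStepMatrix (n : ℕ) : Matrix (Fin n) (Fin n) R :=
  of fun k l => (if k.1 = l.1 then b l else 0) + (if k.1 + 1 = l.1 then 1 else 0) +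
    (if k.1 = l.1 + 1 then 1 else 0)

theorem motzkinMatrix_apply {n : ℕ} (i k : Fin n) :
    motzkinMatrix b n i k = motzkinWeight b i k := rfl

theorem motzkinStepMatrix_apply {n : ℕ} (k l : Fin n) :
    motzkinStepMatrix b n k l = (if k.1 = l.1 then b l else 0) +
      (if k.1 + 1 = l.1 then 1 else 0) + (if k.1 = l.1 + 1 then 1 else 0) := rfl

theorem motzkinWeight_eq_zero_of_lt {i k : ℕ} (h : i < k) : motzkinWeight b i k = 0 := by
  induction i generalizing k with
  | zero => obtain ⟨k, rfl⟩ := Nat.exists_eq_add_one.2 h; rfl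
  | succ i ih =>
    obtain ⟨k, rfl⟩ := Nat.exists_eq_add_one.2 (i.succ_pos.trans h)
    rw [motzkinWeight, ih (by lia), ih (by lia), ih (by lia), zero_mul, add_zero, add_zero]

theorem motzkinWeight_self (i : ℕ) : motzkinWeight b i i = 1 := by
  induction i with
  | zero => rfl
  | succ i ih =>
    rw [motzkinWeight, ih, motzkinWeight_eq_zero_of_lt b i.lt_succ_self,
      motzkinWeight_eq_zero_of_lt b (by lia), zero_mul, add_zero, add_zero]

theorem motzkinMatrix_mul_motzkinStepMatrix_apply {n : ℕ} (i l : Fin n) :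
    (motzkinMatrix b n * motzkinStepMatrix b n) i l = motzkinWeight b (i + 1) l := by
  obtain ⟨l, hl⟩ := l
  have from_above : (if l + 1 < n then motzkinWeight b i (l + 1) else 0) =
      motzkinWeight b i (l + 1) := by
    split_ifs
    · rfl
    · exact (motzkinWeight_eq_zero_of_lt b (by lia)).symm
  simp only [Matrix.mul_apply, motzkinMatrix_apply, motzkinStepMatrix_apply]
  rw [Fin.sum_univ_eq_sum_range (fun k => motzkinWeight b i k * ((if k = l then b l else 0) +
    (if k + 1 = l then 1 else 0) + (if k = l + 1 then 1 else 0))) n]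
  simp only [mul_add, sum_add_distrib, mul_ite, mul_one, mul_zero, sum_ite_eq', mem_range, hl,
    if_true, from_above]
  cases l with
  | zero => simp only [Nat.add_one_ne_zero, if_false, sum_const_zero, add_zero, motzkinWeight]
  | succ l =>
    simp only [Nat.add_right_cancel_iff, sum_ite_eq', mem_range, l.lt_succ_self.trans hl,
      if_true, motzkinWeight]
    rw [add_comm (motzkinWeight b i l)]

theorem motzkinWeight_single (i k : ℕ) :
    motzkinWeight (Pi.single 0 1 : ℕ → R) i k = i.choose ((i + k + 1) / 2) := by
  induction i generalizing k with
  | zero =>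
    cases k with
    | zero => simp [motzkinWeight]
    | succ k => rw [motzkinWeight, Nat.choose_eq_zero_of_lt (by lia), Nat.cast_zero]
  | succ i ih =>
    cases k with
    | zero =>
      have central : i.choose ((i + 1) / 2) = i.choose (i / 2) :=
        Nat.choose_symm_of_eq_add (by lia)
      rw [motzkinWeight, ih, ih, Pi.single_eq_same, mul_one, add_zero, add_zero, central,
        show (i + 1 + 1) / 2 = i / 2 + 1 by lia, Nat.choose_succ_succ, Nat.cast_add]
    | succ k =>
      rw [motzkinWeight, ih, ih (k + 2), Pi.single_eq_of_ne k.succ_ne_zero, mul_zero, add_zero,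
        show (i + (k + 2) + 1) / 2 = (i + k + 1) / 2 + 1 by lia,
        show (i + 1 + (k + 1) + 1) / 2 = (i + k + 1) / 2 + 1 by lia,
        Nat.choose_succ_succ, Nat.cast_add]

theorem motzkinWeight_single_zero_right (i : ℕ) :
    motzkinWeight (Pi.single 0 1 : ℕ → R) i 0 = i.choose (i / 2) := by
  rw [motzkinWeight_single, Nat.choose_symm_of_eq_add (show i = (i + 0 + 1) / 2 + i / 2 by lia)]

end Semiring

section CommSemiring

variable {R : Type*} [CommSemiring R] (b : ℕ → R)

/-- A discrete Green identity: the step matrix is symmetric, so only boundary terms survive. They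
are placed so that no subtraction is needed. -/
theorem sum_range_motzkinWeight_succ_mul_add (i j n : ℕ) :
    ∑ k ∈ range (n + 1), motzkinWeight b (i + 1) k * motzkinWeight b j k +
        motzkinWeight b i n * motzkinWeight b j (n + 1) =
      ∑ k ∈ range (n + 1), motzkinWeight b i k * motzkinWeight b (j + 1) k +
        motzkinWeight b i (n + 1) * motzkinWeight b j n := by
  induction n with
  | zero =>
    simp only [zero_add, sum_range_one, motzkinWeight]
    ring
  | succ n ih =>
    rw [sum_range_succ, sum_range_succ _ (n + 1), motzkinWeight, motzkinWeight]
    let common := motzkinWeight b i (n + 1) * b (n + 1) * motzkinWeight b j (n + 1) +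
      motzkinWeight b i (n + 2) * motzkinWeight b j (n + 1) +
      motzkinWeight b i (n + 1) * motzkinWeight b j (n + 2)
    convert congrArg (· + common) ih using 1 <;> ring

theorem sum_range_motzkinWeight_mul (i : ℕ) {j n : ℕ} (hj : j < n) :
    ∑ k ∈ range n, motzkinWeight b i k * motzkinWeight b j k = motzkinWeight b (i + j) 0 := by
  obtain ⟨n, rfl⟩ := Nat.exists_eq_add_one.2 (j.zero_le.trans_lt hj)
  induction j generalizing i with
  | zero => simp [sum_range_succ', motzkinWeight]
  | succ j ih =>
    have move_step : ∑ k ∈ range (n + 1), motzkinWeight b (i + 1) k * motzkinWeight b j k =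
        ∑ k ∈ range (n + 1), motzkinWeight b i k * motzkinWeight b (j + 1) k := by
      simpa only [motzkinWeight_eq_zero_of_lt b (show j < n by lia),
        motzkinWeight_eq_zero_of_lt b (show j < n + 1 by lia), mul_zero, add_zero]
        using sum_range_motzkinWeight_succ_mul_add b i j n
    rw [← move_step, ih (i + 1) (by lia), Nat.succ_add_eq_add_succ]

theorem hankel_motzkinWeight_succ_eq_mul (n : ℕ) :
    of (fun i j : Fin n => motzkinWeight b (i + j + 1) 0) =
      motzkinMatrix b n * motzkinStepMatrix b n * (motzkinMatrix b n)ᵀ := by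
  ext i j
  rw [Matrix.mul_apply]
  simp only [motzkinMatrix_mul_motzkinStepMatrix_apply, transpose_apply, motzkinMatrix_apply,
    of_apply]
  rw [Fin.sum_univ_eq_sum_range (fun k => motzkinWeight b (i + 1) k * motzkinWeight b j k),
    sum_range_motzkinWeight_mul b _ j.2, Nat.add_right_comm]

end CommSemiring

section CommRing

variable {R : Type*} [CommRing R] (b : ℕ → R)

theorem det_motzkinMatrix (n : ℕ) : (motzkinMatrix b n).det = 1 := by
  have lower : (motzkinMatrix b n).IsLowerTriangular :=
    fun i k h => motzkinWeight_eq_zero_of_lt b h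
  rw [det_of_isLowerTriangular _ lower]
  exact prod_eq_one fun i _ => motzkinWeight_self b i

theorem det_hankel_motzkinWeight_succ (n : ℕ) :
    (of fun i j : Fin n => motzkinWeight b (i + j + 1) 0).det = (motzkinStepMatrix b n).det := by
  rw [hankel_motzkinWeight_succ_eq_mul, det_mul, det_mul, det_transpose, det_motzkinMatrix,
    one_mul, mul_one]

theorem det_motzkinStepMatrix_add_two (n : ℕ) :
    (motzkinStepMatrix b (n + 2)).det =
      b (n + 1) * (motzkinStepMatrix b (n + 1)).det - (motzkinStepMatrix b n).det := by
  let J := motzkinStepMatrix b (n + 2)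
  have minor_last : J.submatrix Fin.castSucc Fin.castSucc = motzkinStepMatrix b (n + 1) := rfl
  have minor_corner : (J.submatrix Fin.castSucc (Fin.last n).castSucc.succAbove).det =
      (motzkinStepMatrix b n).det := by
    have minor : (J.submatrix Fin.castSucc (Fin.last n).castSucc.succAbove).submatrix
        Fin.castSucc Fin.castSucc = motzkinStepMatrix b n := by
      ext i j
      simp [J, motzkinStepMatrix_apply]
    have column_zero (i : Fin n) : J i.castSucc.castSucc (Fin.last (n + 1)) = 0 := by
      grind [motzkinStepMatrix_apply, Fin.val_castSucc]
    have column_corner : J (Fin.last n).castSucc (Fin.last (n + 1)) = 1 := by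
      grind [motzkinStepMatrix_apply, Fin.val_castSucc]
    rw [det_succ_column _ (Fin.last n), Fin.sum_univ_castSucc, Fin.succAbove_last]
    simp [minor, column_zero, column_corner]
  have row_zero (j : Fin n) : J (Fin.last (n + 1)) j.castSucc.castSucc = 0 := by
    grind [motzkinStepMatrix_apply, Fin.val_castSucc]
  have row_corner : J (Fin.last (n + 1)) (Fin.last n).castSucc = 1 := by
    grind [motzkinStepMatrix_apply, Fin.val_castSucc]
  have row_last : J (Fin.last (n + 1)) (Fin.last (n + 1)) = b (n + 1) := by
    grind [motzkinStepMatrix_apply]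
  change J.det = _
  rw [det_succ_row J (Fin.last (n + 1)), Fin.sum_univ_castSucc, Fin.sum_univ_castSucc,
    Fin.succAbove_last]
  simp only [Nat.succ_eq_add_one, Fin.val_last, Fin.val_castSucc, row_zero, mul_zero, zero_mul,
    sum_const_zero, odd_add_one_self, Odd.neg_one_pow, row_corner, mul_one, minor_corner, neg_mul,
    one_mul, zero_add, Even.add_self, Even.neg_pow, one_pow, row_last, minor_last]
  ring

theorem det_motzkinStepMatrix_single :
    ∀ n : ℕ, (motzkinStepMatrix (Pi.single 0 1 : ℕ → R) n).det = (-1) ^ (n / 2)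
  | 0 => by simp
  | 1 => by simp [motzkinStepMatrix_apply]
  | n + 2 => by
    rw [det_motzkinStepMatrix_add_two, det_motzkinStepMatrix_single n,
      Pi.single_eq_of_ne n.succ_ne_zero, Nat.add_div_right n two_pos, pow_succ]
    ring

end CommRing

theorem central_binomial_hankel_det_shift (n : ℕ) (hn : 0 < n) :
    (Matrix.of fun i j : Fin n =>
      ((i.1 + j.1 + 1).choose ((i.1 + j.1 + 1) / 2) : ℤ)).det = (-1) ^ (n / 2) := by
  simp only [← motzkinWeight_single_zero_right (R := ℤ)]
  rw [det_hankel_motzkinWeight_succ, det_motzkinStepMatrix_single]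
end

section
/- For all positive integers n and non-negative integers k, the determinant of the n×n matrix whose (i,j) entry is the sum over l from 0 to k of binomial(i+j, floor((i+j+1-k)/2) + l) equals (-1)^{n_1 * binomial(k+1,2)} if n = (k+1)n_1 or n = (k+1)n_1 + 1 for some non-negative integer n_1, and equals 0 if n is not congruent to 0 or 1 modulo k+1. -/
/- Integer binomial coefficient: `chz a b = binomial(a,b)`, equal to `0` unless
`0 ≤ b ≤ a`. -/
def chz (a b : ℤ) : ℤ := if 0 ≤ b ∧ b ≤ a then (a.toNat.choose b.toNat : ℤ) else 0

/-! Let `Λ` be the linear functional on `ℤ[X]` whose moments are the entries for `k = 0`. Pascal's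
rule shows that the entries for general `k` are the moments of `f ↦ Λ (S_k * f)`, where `S_k` is
the rescaled Chebyshev polynomial of the second kind, and that the polynomials
`V_j = S_j - S_{j-1}` are orthonormal for `Λ`. Replacing the monomials by monic polynomials does
not change the determinant: the columns are expanded in the `V_j`, and the rows, with `p = k + 1`,
in the polynomials `V_m(C_p)` and `S_m(C_p) * (C_a - C_{a-1})`, `0 < a < p`, of degrees `p * m`
and `p * m + a`. As `S_{p-1} * S_m(C_p) = S_{p(m+1)-1}`, the products of `S_k` with the row
polynomials are a sum of `p` consecutive `V_j` and a difference of two `V_j`, respectively. The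
resulting matrix is block upper triangular with constant `p × p` diagonal blocks, each an
antidiagonal matrix of entries `-1` bordered by a row of ones; in a last block truncated to size
`1 < r < p` the second row vanishes.
-/

open Polynomial

section LeadingMinor

variable {R : Type*} [CommRing R]

/-- The `n`-th leading principal minor of the infinite matrix `f`. -/
def leadingMinor (f : ℕ → ℕ → R) (n : ℕ) : R :=
  (Matrix.of fun i j : Fin n => f i j).det

theorem leadingMinor_bilin_of_isMonicOfDegree (B : R[X] →ₗ[R] R[X] →ₗ[R] R) {p q : ℕ → R[X]}
    (hp : ∀ i, IsMonicOfDegree (p i) i) (hq : ∀ i, IsMonicOfDegree (q i) i) (n : ℕ) :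
    leadingMinor (fun i j => B (p i) (q j)) n = leadingMinor (fun i j => B (X ^ i) (X ^ j)) n := by
  have det_coeff_eq_one {f : ℕ → R[X]} (hf : ∀ i, IsMonicOfDegree (f i) i) :
      (Matrix.of fun i j : Fin n => (f j).coeff i).det = 1 :=
    Matrix.det_matrixOfPolynomials (fun i : Fin n => f i) (fun i => (hf i).natDegree_eq)
      fun i => (hf i).monic
  have expand {f : ℕ → R[X]} (hf : ∀ i, IsMonicOfDegree (f i) i) (i : Fin n) :
      f i = ∑ a : Fin n, (f i).coeff a • X ^ (a : ℕ) := by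
    conv_lhs => rw [as_sum_range_C_mul_X_pow' (f i) (by rw [(hf i).natDegree_eq]; exact i.2),
      Finset.sum_range]
    simp only [smul_eq_C_mul]
  have change_of_basis : (Matrix.of fun i j : Fin n => B (p i) (q j)) =
      (Matrix.of fun i j : Fin n => (p j).coeff i).transpose *
        (Matrix.of fun i j : Fin n => B (X ^ (i : ℕ)) (X ^ (j : ℕ))) *
        (Matrix.of fun i j : Fin n => (q j).coeff i) := by
    ext i j
    rw [Matrix.of_apply, expand hp i, expand hq j]
    simp only [Matrix.mul_apply, Matrix.of_apply, Matrix.transpose_apply, map_sum, map_smul,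
      LinearMap.sum_apply, LinearMap.smul_apply, smul_eq_mul, Finset.sum_mul]
    refine Finset.sum_congr rfl fun b _ => ?_
    rw [Finset.mul_sum]
    exact Finset.sum_congr rfl fun a _ => by ring
  rw [leadingMinor, change_of_basis, Matrix.det_mul, Matrix.det_mul, Matrix.det_transpose,
    det_coeff_eq_one hp, det_coeff_eq_one hq, one_mul, mul_one, leadingMinor]

theorem leadingMinor_period_add {f : ℕ → ℕ → R} {p : ℕ}
    (hshift : ∀ i j, f (p + i) (p + j) = f i j) (hzero : ∀ i, ∀ j < p, f (p + i) j = 0) (n : ℕ) :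
    leadingMinor f (p + n) = leadingMinor f p * leadingMinor f n := by
  simp only [leadingMinor]
  rw [← Matrix.det_submatrix_equiv_self finSumFinEquiv,
    ← Matrix.det_fromBlocks_zero₂₁ _ (Matrix.of fun (i : Fin p) (j : Fin n) => f i (p + j))]
  congr 1
  ext (i | i) (j | j) <;> simp [hshift, hzero]

theorem leadingMinor_period_mul_add {f : ℕ → ℕ → R} {p : ℕ}
    (hshift : ∀ i j, f (p + i) (p + j) = f i j) (hzero : ∀ i, ∀ j < p, f (p + i) j = 0)
    (q r : ℕ) :
    leadingMinor f (p * q + r) = leadingMinor f p ^ q * leadingMinor f r := by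
  induction q with
  | zero => simp
  | succ q ih =>
    rw [show p * (q + 1) + r = p + (p * q + r) by ring, leadingMinor_period_add hshift hzero, ih,
      pow_succ', mul_assoc]

theorem det_neg_antidiagonal (n : ℕ) :
    (Matrix.of fun i j : Fin n => if i.1 + j.1 + 1 = n then (-1 : R) else 0).det =
      (-1) ^ (n + 1).choose 2 := by
  induction n with
  | zero => simp
  | succ n ih =>
    have submatrix_eq : (Matrix.of fun i j : Fin (n + 1) =>
        if i.1 + j.1 + 1 = n + 1 then (-1 : R) else 0).submatrix Fin.succ (Fin.last n).succAbove =
        Matrix.of fun i j : Fin n => if i.1 + j.1 + 1 = n then (-1 : R) else 0 := by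
      ext i j
      simp [Fin.succAbove_last, add_right_comm]
    rw [Matrix.det_succ_row_zero, Finset.sum_eq_single (Fin.last n)]
    · rw [submatrix_eq, ih, Nat.choose_succ_succ' (n + 1) 1]
      simp [pow_add]
    · intro j _ hj
      have : j.1 ≠ n := fun h => hj (Fin.ext h)
      simp [this]
    · simp

end LeadingMinor

section Chebyshev

variable (R : Type*) [CommRing R]

theorem chebyshevC_mul_chebyshevS (r n : ℤ) :
    Chebyshev.C R r * Chebyshev.S R n = Chebyshev.S R (n + r) + Chebyshev.S R (n - r) := by
  induction r using Chebyshev.induct' with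
  | zero => simp [two_mul]
  | one => rw [Chebyshev.C_one, Chebyshev.S_add_one]; ring
  | add_two r ih₁ ih₀ =>
    have h₁ := Chebyshev.S_add_two R (n + r)
    have h₂ := Chebyshev.S_sub_two R (n - r)
    have h₃ := Chebyshev.C_add_two R r
    linear_combination (norm := ring_nf) Chebyshev.S R n * h₃ - h₂ - h₁ - ih₀ + (X : R[X]) * ih₁
  | neg r ih => rw [Chebyshev.C_neg, ih, sub_neg_eq_add, ← sub_eq_add_neg, add_comm]

theorem chebyshevS_mul_comp_chebyshevC (p : ℤ) (m : ℕ) :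
    Chebyshev.S R (p - 1) * (Chebyshev.S R (m - 1)).comp (Chebyshev.C R p) =
      Chebyshev.S R (p * m - 1) := by
  induction m using Nat.twoStepInduction with
  | zero => simp
  | one => simp
  | more m ih₀ ih₁ =>
    have hC := chebyshevC_mul_chebyshevS R p (p * (m + 1) - 1)
    have hS := congrArg (·.comp (Chebyshev.C R p)) (Chebyshev.S_add_one R m)
    simp only [sub_comp, mul_comp, X_comp] at hS
    push_cast at ih₁ ⊢
    rw [add_sub_cancel_right] at ih₁
    rw [show (m : ℤ) + 2 - 1 = m + 1 by ring]
    linear_combination (norm := ring_nf)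
      Chebyshev.S R (p - 1) * hS + Chebyshev.C R p * ih₁ - ih₀ + hC

/-- The Chebyshev polynomials of the third kind, rescaled so that
`V_n (2 * cos θ) = cos ((n + 1 / 2) * θ) / cos (θ / 2)`. -/
noncomputable def chebyshevV (n : ℤ) : R[X] :=
  Chebyshev.S R n - Chebyshev.S R (n - 1)

theorem chebyshevS_mul_chebyshevC_sub (n a : ℤ) :
    Chebyshev.S R (n - 1) * (Chebyshev.C R a - Chebyshev.C R (a - 1)) =
      chebyshevV R (n + a - 1) - chebyshevV R (n - a) := by
  rw [mul_comm, sub_mul, chebyshevC_mul_chebyshevS, chebyshevC_mul_chebyshevS, chebyshevV,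
    chebyshevV]
  ring_nf

theorem chebyshevS_mul_chebyshevV_comp (p : ℤ) (m : ℕ) :
    Chebyshev.S R (p - 1) * (chebyshevV R m).comp (Chebyshev.C R p) =
      Chebyshev.S R (p * (m + 1) - 1) - Chebyshev.S R (p * m - 1) := by
  have h := chebyshevS_mul_comp_chebyshevC R p (m + 1)
  push_cast at h
  rw [add_sub_cancel_right] at h
  rw [chebyshevV, sub_comp, mul_sub, h, chebyshevS_mul_comp_chebyshevC]

section Degree

variable [Nontrivial R]

variable {R} in
theorem isMonicOfDegree_X_mul_sub {p q : R[X]} {n : ℕ} (hp : IsMonicOfDegree p (n + 1))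
    (hq : q.natDegree ≤ n) : IsMonicOfDegree (X * p - q) (n + 2) := by
  have h := (isMonicOfDegree_X R).mul hp
  rw [show 1 + (n + 1) = n + 2 by ring] at h
  exact h.sub (by lia)

theorem isMonicOfDegree_chebyshevS (n : ℕ) : IsMonicOfDegree (Chebyshev.S R n) n := by
  induction n using Nat.twoStepInduction with
  | zero => simp [isMonicOfDegree_zero_iff]
  | one => simpa using isMonicOfDegree_X R
  | more n ih₀ ih₁ =>
    push_cast at ih₁ ⊢
    rw [Chebyshev.S_add_two]
    exact isMonicOfDegree_X_mul_sub ih₁ ih₀.natDegree_eq.le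

theorem natDegree_chebyshevC_le_and_isMonicOfDegree_succ (n : ℕ) :
    (Chebyshev.C R n).natDegree ≤ n ∧ IsMonicOfDegree (Chebyshev.C R (n + 1)) (n + 1) := by
  induction n with
  | zero => exact ⟨by simp, by simpa using isMonicOfDegree_X R⟩
  | succ n ih =>
    push_cast
    refine ⟨ih.2.natDegree_eq.le, ?_⟩
    rw [add_assoc (n : ℤ), one_add_one_eq_two, Chebyshev.C_add_two]
    exact isMonicOfDegree_X_mul_sub ih.2 ih.1

theorem isMonicOfDegree_chebyshevC {n : ℕ} (hn : n ≠ 0) :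
    IsMonicOfDegree (Chebyshev.C R n) n := by
  obtain ⟨m, rfl⟩ := Nat.exists_eq_succ_of_ne_zero hn
  exact_mod_cast (natDegree_chebyshevC_le_and_isMonicOfDegree_succ R m).2

theorem isMonicOfDegree_chebyshevC_sub {n : ℕ} (hn : n ≠ 0) :
    IsMonicOfDegree (Chebyshev.C R n - Chebyshev.C R (n - 1)) n := by
  obtain ⟨m, rfl⟩ := Nat.exists_eq_succ_of_ne_zero hn
  have h := natDegree_chebyshevC_le_and_isMonicOfDegree_succ R m
  push_cast
  rw [add_sub_cancel_right]
  exact h.2.sub (Nat.lt_succ_of_le h.1)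

theorem isMonicOfDegree_chebyshevV (n : ℕ) : IsMonicOfDegree (chebyshevV R n) n := by
  rcases n with _ | n
  · simp [chebyshevV, isMonicOfDegree_zero_iff]
  · refine (isMonicOfDegree_chebyshevS R (n + 1)).sub ?_
    push_cast
    rw [add_sub_cancel_right, (isMonicOfDegree_chebyshevS R n).natDegree_eq]
    exact n.lt_succ_self

end Degree

end Chebyshev

section MiddleBinomialSums

theorem chz_natCast (a b : ℕ) : chz a b = a.choose b := by
  rcases le_or_gt b a with h | h
  · simp [chz, h]
  · simp [chz, h.not_ge, Nat.choose_eq_zero_of_lt h]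

theorem chz_of_neg {a b : ℤ} (hb : b < 0) : chz a b = 0 :=
  if_neg fun h => hb.not_ge h.1

theorem chz_zero_left (b : ℤ) : chz 0 b = if b = 0 then 1 else 0 := by
  by_cases h : b = 0
  · simp [chz, h]
  · rw [chz, if_neg (by lia), if_neg h]

theorem chz_zero_right (a : ℕ) : chz a 0 = 1 := by
  simp [chz]

theorem chz_succ_left (a : ℕ) (b : ℤ) : chz (a + 1 : ℕ) b = chz a b + chz a (b - 1) := by
  obtain hb | rfl | hb := lt_trichotomy b 0
  · simp only [chz_of_neg hb, chz_of_neg (show b - 1 < 0 by lia), add_zero]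
  · rw [chz_zero_right, chz_zero_right, chz_of_neg (by lia), add_zero]
  · obtain ⟨c, rfl⟩ : ∃ c : ℕ, b = (c + 1 : ℕ) := ⟨(b - 1).toNat, by lia⟩
    rw [show ((c + 1 : ℕ) : ℤ) - 1 = c by simp, chz_natCast, chz_natCast, chz_natCast,
      Nat.choose_succ_succ', Nat.cast_add, add_comm]

/-- The sum of the `r` middle binomial coefficients of order `m`, the window being placed half a
step to the right when it cannot be centred. The matrix entries are the case `r = k + 1`. -/
def middleChooseSum (r m : ℕ) : ℤ :=
  ∑ l ∈ Finset.range r, chz m (((m : ℤ) + 2 - r) / 2 + l)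

theorem middleChooseSum_zero_right (r : ℕ) :
    middleChooseSum r 0 = if 0 < r then 1 else 0 := by
  have middle (l : ℕ) (hl : l < r) : ((2 : ℤ) - r) / 2 + l = 0 ↔ (r - 1) / 2 = l := by lia
  calc middleChooseSum r 0
      = ∑ l ∈ Finset.range r, if (r - 1) / 2 = l then (1 : ℤ) else 0 :=
        Finset.sum_congr rfl fun l hl => by
          simp only [Nat.cast_zero, zero_add, chz_zero_left, middle l (Finset.mem_range.1 hl)]
    _ = if 0 < r then 1 else 0 := by
        rw [Finset.sum_ite_eq]
        exact if_congr (by rw [Finset.mem_range]; lia) rfl rfl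

theorem middleChooseSum_succ_succ (r m : ℕ) :
    middleChooseSum (r + 1) (m + 1) = middleChooseSum (r + 2) m + middleChooseSum r m := by
  have hb₁ : (((m + 1 : ℕ) : ℤ) + 2 - (r + 1 : ℕ)) / 2 = ((m : ℤ) + 2 - r) / 2 := by lia
  have hb₂ : ((m : ℤ) + 2 - (r + 2 : ℕ)) / 2 = ((m : ℤ) + 2 - r) / 2 - 1 := by lia
  simp only [middleChooseSum, hb₁, hb₂]
  generalize ((m : ℤ) + 2 - r) / 2 = b
  calc ∑ l ∈ Finset.range (r + 1), chz (m + 1 : ℕ) (b + l)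
      = ∑ l ∈ Finset.range (r + 1), chz m (b + l) +
          ∑ l ∈ Finset.range (r + 1), chz m (b - 1 + l) := by
        rw [← Finset.sum_add_distrib]
        refine Finset.sum_congr rfl fun l _ => ?_
        rw [chz_succ_left, add_sub_right_comm]
    _ = ∑ l ∈ Finset.range (r + 2), chz m (b - 1 + l) + ∑ l ∈ Finset.range r, chz m (b + l) := by
        rw [Finset.sum_range_succ, Finset.sum_range_succ _ (r + 1), Nat.cast_succ,
          show b - 1 + ((r : ℤ) + 1) = b + r by ring]
        ring

/-- The linear functional `Λ` on `ℤ[X]` whose `m`-th moment is the binomial coefficient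
`m.choose ⌈m / 2⌉`. -/
noncomputable def middleChooseFunctional : ℤ[X] →ₗ[ℤ] ℤ :=
  (basisMonomials ℤ).constr ℤ (middleChooseSum 1)

theorem middleChooseFunctional_X_pow (m : ℕ) :
    middleChooseFunctional (X ^ m) = middleChooseSum 1 m := by
  simpa only [middleChooseFunctional, coe_basisMonomials, ← X_pow_eq_monomial] using
    (basisMonomials ℤ).constr_basis ℤ (middleChooseSum 1) m

theorem middleChooseFunctional_chebyshevS_mul_X_pow (r m : ℕ) :
    middleChooseFunctional (Chebyshev.S ℤ (r - 1) * X ^ m) = middleChooseSum r m := by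
  induction r using Nat.twoStepInduction generalizing m with
  | zero => simp [middleChooseSum]
  | one => simp [middleChooseFunctional_X_pow]
  | more r ih₀ ih₁ =>
    have recurrence : Chebyshev.S ℤ ((r + 2 : ℕ) - 1) * X ^ m =
        Chebyshev.S ℤ ((r + 1 : ℕ) - 1) * X ^ (m + 1) - Chebyshev.S ℤ (r - 1) * X ^ m := by
      push_cast
      rw [show (r : ℤ) + 2 - 1 = r + 1 by ring, add_sub_cancel_right, Chebyshev.S_add_one]
      ring
    rw [recurrence, map_sub, ih₁, ih₀, middleChooseSum_succ_succ, add_sub_cancel_right]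

theorem middleChooseFunctional_chebyshevS_mul_chebyshevS (m n : ℕ) :
    middleChooseFunctional (Chebyshev.S ℤ (m - 1) * Chebyshev.S ℤ (n - 1)) = min m n := by
  induction m using Nat.twoStepInduction generalizing n with
  | zero => simp
  | one =>
    have h := middleChooseFunctional_chebyshevS_mul_X_pow n 0
    rw [pow_zero, mul_one, middleChooseSum_zero_right] at h
    rw [Nat.cast_one, sub_self, Chebyshev.S_zero, one_mul, h]
    split_ifs <;> lia
  | more m ih₀ ih₁ =>
    rcases n with _ | n
    · simp
    have recurrence : Chebyshev.S ℤ ((m + 2 : ℕ) - 1) * Chebyshev.S ℤ ((n + 1 : ℕ) - 1) =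
        Chebyshev.S ℤ ((m + 1 : ℕ) - 1) * Chebyshev.S ℤ ((n + 2 : ℕ) - 1) +
          Chebyshev.S ℤ ((m + 1 : ℕ) - 1) * Chebyshev.S ℤ (n - 1) -
          Chebyshev.S ℤ (m - 1) * Chebyshev.S ℤ ((n + 1 : ℕ) - 1) := by
      have hm := Chebyshev.S_add_one ℤ m
      have hn := Chebyshev.S_add_one ℤ n
      push_cast
      rw [show (m : ℤ) + 2 - 1 = m + 1 by ring, show (n : ℤ) + 2 - 1 = n + 1 by ring,
        add_sub_cancel_right, add_sub_cancel_right]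
      linear_combination Chebyshev.S ℤ n * hm - Chebyshev.S ℤ m * hn
    rw [recurrence, map_sub, map_add, ih₁, ih₁, ih₀]
    lia

theorem middleChooseFunctional_chebyshevS_mul_chebyshevV (n j : ℕ) :
    middleChooseFunctional (Chebyshev.S ℤ (n - 1) * chebyshevV ℤ j) = if j < n then 1 else 0 := by
  have h := middleChooseFunctional_chebyshevS_mul_chebyshevS n (j + 1)
  rw [Nat.cast_succ, add_sub_cancel_right] at h
  rw [chebyshevV, mul_sub, map_sub, h, middleChooseFunctional_chebyshevS_mul_chebyshevS]
  split_ifs <;> lia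

theorem middleChooseFunctional_chebyshevV_mul_chebyshevV (i j : ℕ) :
    middleChooseFunctional (chebyshevV ℤ i * chebyshevV ℤ j) = if i = j then 1 else 0 := by
  have h := middleChooseFunctional_chebyshevS_mul_chebyshevV (i + 1) j
  rw [Nat.cast_succ, add_sub_cancel_right] at h
  rw [chebyshevV, sub_mul, map_sub, h, middleChooseFunctional_chebyshevS_mul_chebyshevV]
  split_ifs <;> lia

end MiddleBinomialSums

section ReducedMatrix

/-- The monic polynomial of degree `i` which replaces `X ^ i` in the `i`-th row; it is chosen such
that its product with `S_{p-1}` has a short expansion in the `V_j`. -/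
noncomputable def rowPolynomial (p i : ℕ) : ℤ[X] :=
  if p ∣ i then (chebyshevV ℤ (i / p : ℕ)).comp (Chebyshev.C ℤ p)
  else (Chebyshev.S ℤ (i / p : ℕ)).comp (Chebyshev.C ℤ p) *
    (Chebyshev.C ℤ (i % p : ℕ) - Chebyshev.C ℤ ((i % p : ℕ) - 1))

theorem isMonicOfDegree_rowPolynomial {p : ℕ} (hp : p ≠ 0) (i : ℕ) :
    IsMonicOfDegree (rowPolynomial p i) i := by
  have hC := isMonicOfDegree_chebyshevC ℤ hp
  unfold rowPolynomial
  split_ifs with h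
  · simpa only [Nat.div_mul_cancel h] using (isMonicOfDegree_chebyshevV ℤ (i / p)).comp hp hC
  · have hmod : i % p ≠ 0 := fun h₀ => h (Nat.dvd_of_mod_eq_zero h₀)
    simpa only [Nat.div_add_mod'] using ((isMonicOfDegree_chebyshevS ℤ (i / p)).comp hp hC).mul
      (isMonicOfDegree_chebyshevC_sub ℤ hmod)

theorem chebyshevS_mul_rowPolynomial_of_dvd {p i : ℕ} (hp : p ≠ 0) (h : p ∣ i) :
    Chebyshev.S ℤ (p - 1) * rowPolynomial p i =
      Chebyshev.S ℤ ((i + p : ℕ) - 1) - Chebyshev.S ℤ (i - 1) := by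
  obtain ⟨m, rfl⟩ := h
  rw [rowPolynomial, if_pos (dvd_mul_right p m), Nat.mul_div_cancel_left m (Nat.pos_of_ne_zero hp),
    chebyshevS_mul_chebyshevV_comp]
  push_cast
  ring_nf

theorem chebyshevS_mul_rowPolynomial_of_not_dvd {p i : ℕ} (h : ¬p ∣ i) :
    Chebyshev.S ℤ (p - 1) * rowPolynomial p i =
      chebyshevV ℤ (i + p - 1) - chebyshevV ℤ (p * (2 * (i / p : ℕ) + 1) - i) := by
  have hdiv : (p : ℤ) * (i / p : ℕ) + (i % p : ℕ) = i := mod_cast Nat.div_add_mod i p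
  have hS := chebyshevS_mul_comp_chebyshevC ℤ p (i / p + 1)
  rw [Nat.cast_succ, add_sub_cancel_right] at hS
  rw [rowPolynomial, if_neg h, ← mul_assoc, hS, chebyshevS_mul_chebyshevC_sub]
  congr 2
  · linear_combination hdiv
  · linear_combination -hdiv

/-- The coefficient of `V_j` in the product of `S_{p-1}` with the `i`-th row polynomial. In row
`p * m + a` with `0 < a < p`, the entry `-1` stands in column `p * (m + 1) - a`. -/
def reducedEntry (p i j : ℕ) : ℤ :=
  if p ∣ i then if i ≤ j ∧ j < i + p then 1 else 0
  else (if j + 1 = i + p then 1 else 0) - if i + j = p * (2 * (i / p) + 1) then 1 else 0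

theorem middleChooseFunctional_chebyshevS_mul_rowPolynomial_mul_chebyshevV {p : ℕ} (hp : p ≠ 0)
    (i j : ℕ) :
    middleChooseFunctional (Chebyshev.S ℤ (p - 1) * (rowPolynomial p i * chebyshevV ℤ j)) =
      reducedEntry p i j := by
  rw [← mul_assoc, reducedEntry]
  by_cases h : p ∣ i
  · rw [if_pos h, chebyshevS_mul_rowPolynomial_of_dvd hp h, sub_mul, map_sub,
      middleChooseFunctional_chebyshevS_mul_chebyshevV,
      middleChooseFunctional_chebyshevS_mul_chebyshevV]
    split_ifs <;> lia
  · have hi : i ≤ p * (2 * (i / p) + 1) := by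
      have := Nat.div_add_mod i p
      have := Nat.mod_lt i (Nat.pos_of_ne_zero hp)
      lia
    have hpos : (i : ℤ) + p - 1 = (i + p - 1 : ℕ) := by lia
    have hneg : (p : ℤ) * (2 * (i / p : ℕ) + 1) - i = (p * (2 * (i / p) + 1) - i : ℕ) := by
      rw [Nat.cast_sub hi]
      push_cast
      rfl
    rw [if_neg h, chebyshevS_mul_rowPolynomial_of_not_dvd h, hpos, hneg, sub_mul, map_sub,
      middleChooseFunctional_chebyshevV_mul_chebyshevV,
      middleChooseFunctional_chebyshevV_mul_chebyshevV]
    congr 1 <;> exact if_congr (by lia) rfl rfl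

theorem leadingMinor_middleChooseSum {p : ℕ} (hp : p ≠ 0) (n : ℕ) :
    leadingMinor (fun i j => middleChooseSum p (i + j)) n = leadingMinor (reducedEntry p) n := by
  let B : ℤ[X] →ₗ[ℤ] ℤ[X] →ₗ[ℤ] ℤ := (LinearMap.mul ℤ ℤ[X]).compr₂
    (middleChooseFunctional ∘ₗ LinearMap.mulLeft ℤ (Chebyshev.S ℤ (p - 1)))
  have hB (f g : ℤ[X]) : B f g = middleChooseFunctional (Chebyshev.S ℤ (p - 1) * (f * g)) := rfl
  have h := leadingMinor_bilin_of_isMonicOfDegree B (isMonicOfDegree_rowPolynomial hp)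
    (isMonicOfDegree_chebyshevV ℤ) n
  simpa only [hB, ← pow_add, middleChooseFunctional_chebyshevS_mul_X_pow,
    middleChooseFunctional_chebyshevS_mul_rowPolynomial_mul_chebyshevV hp] using h.symm

theorem reducedEntry_period_add (p i j : ℕ) :
    reducedEntry p (p + i) (p + j) = reducedEntry p i j := by
  rcases p.eq_zero_or_pos with rfl | hp
  · simp only [zero_add]
  simp only [reducedEntry, Nat.dvd_add_right (dvd_refl p), Nat.add_div_left i hp]
  congr 1
  · exact if_congr (by lia) rfl rfl
  · congr 1 <;> exact if_congr (by lia) rfl rfl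

theorem reducedEntry_period_add_of_lt {p : ℕ} (i : ℕ) {j : ℕ} (hj : j < p) :
    reducedEntry p (p + i) j = 0 := by
  have hp : 0 < p := by lia
  have hi : i < p * (i / p) + p := Nat.lt_mul_div_succ i hp
  have hrow : ¬(p + i ≤ j ∧ j < p + i + p) := by lia
  have hpos : j + 1 ≠ p + i + p := by lia
  have hneg : p + i + j ≠ p * (2 * (i / p + 1) + 1) := by lia
  rw [reducedEntry, Nat.add_div_left i hp, if_neg hrow, if_neg hpos, if_neg hneg, sub_zero,
    ite_self]

theorem reducedEntry_of_lt {p i j : ℕ} (hi : i < p) (hj : j < p) :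
    reducedEntry p i j = if i = 0 then 1 else if i + j = p then -1 else 0 := by
  rcases eq_or_ne i 0 with rfl | hi₀
  · simp [reducedEntry, hj]
  · rw [reducedEntry, if_neg (Nat.not_dvd_of_pos_of_lt (Nat.pos_of_ne_zero hi₀) hi), if_neg hi₀,
      Nat.div_eq_of_lt hi, if_neg (by lia), mul_zero, zero_add, mul_one]
    split_ifs <;> rfl

theorem leadingMinor_reducedEntry_self (p : ℕ) :
    leadingMinor (reducedEntry p) p = (-1) ^ p.choose 2 := by
  rcases p with _ | k
  · simp [leadingMinor]
  have submatrix_eq : (Matrix.of fun i j : Fin (k + 1) => reducedEntry (k + 1) i j).submatrix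
      (Fin.succAbove 0) Fin.succ =
        Matrix.of fun i j : Fin k => if i.1 + j.1 + 1 = k then (-1 : ℤ) else 0 := by
    ext i j
    rw [Matrix.submatrix_apply, Matrix.of_apply, Matrix.of_apply, Fin.succAbove_zero,
      reducedEntry_of_lt i.succ.2 j.succ.2, Fin.val_succ, Fin.val_succ, if_neg (by lia)]
    exact if_congr (by lia) rfl rfl
  rw [leadingMinor, Matrix.det_succ_column_zero, Finset.sum_eq_single 0]
  · rw [submatrix_eq, det_neg_antidiagonal]
    simp [reducedEntry_of_lt]
  · intro i _ hi
    have hi₀ : i.1 ≠ 0 := fun h => hi (Fin.ext h)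
    simp [reducedEntry_of_lt i.2 k.succ_pos, hi₀, i.2.ne]
  · simp

theorem leadingMinor_reducedEntry_of_lt {p r : ℕ} (hr₁ : 1 < r) (hrp : r < p) :
    leadingMinor (reducedEntry p) r = 0 := by
  refine Matrix.det_eq_zero_of_row_eq_zero ⟨1, hr₁⟩ fun j => ?_
  rw [Matrix.of_apply, reducedEntry_of_lt (by lia) (by lia), if_neg one_ne_zero, if_neg (by lia)]

theorem leadingMinor_reducedEntry_mul_add (p q r : ℕ) :
    leadingMinor (reducedEntry p) (p * q + r) =
      (-1) ^ (q * p.choose 2) * leadingMinor (reducedEntry p) r := by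
  rw [leadingMinor_period_mul_add (reducedEntry_period_add p)
    (fun i _ hj => reducedEntry_period_add_of_lt i hj), leadingMinor_reducedEntry_self p,
    ← pow_mul, mul_comm q]

theorem det_sum_chz_eq_leadingMinor (n k : ℕ) :
    (Matrix.of fun i j : Fin n =>
      ∑ l ∈ Finset.range (k + 1),
        chz ((i.1 : ℤ) + j.1) (Int.fdiv ((i.1 : ℤ) + j.1 + 1 - k) 2 + l)).det =
      leadingMinor (reducedEntry (k + 1)) n := by
  rw [← leadingMinor_middleChooseSum k.succ_ne_zero, leadingMinor]
  congr 2
  ext i j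
  have hwindow : (i : ℤ) + j + 1 - k = (i + j : ℕ) + 2 - (k + 1 : ℕ) := by lia
  rw [middleChooseSum, Int.fdiv_eq_ediv_of_nonneg _ zero_le_two, hwindow, Nat.cast_add]

end ReducedMatrix

theorem hankel_det_sum_binomial (n k : ℕ) (hn : 0 < n) :
    (∀ n₁ : ℕ, n = (k + 1) * n₁ ∨ n = (k + 1) * n₁ + 1 →
      (Matrix.of fun i j : Fin n =>
        ∑ l ∈ Finset.range (k + 1),
          chz ((i.1 : ℤ) + j.1) (Int.fdiv ((i.1 : ℤ) + j.1 + 1 - k) 2 + l)).det =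
        (-1) ^ (n₁ * Nat.choose (k + 1) 2)) ∧
    (n % (k + 1) ≠ 0 ∧ n % (k + 1) ≠ 1 →
      (Matrix.of fun i j : Fin n =>
        ∑ l ∈ Finset.range (k + 1),
          chz ((i.1 : ℤ) + j.1) (Int.fdiv ((i.1 : ℤ) + j.1 + 1 - k) 2 + l)).det = 0) := by
  rw [det_sum_chz_eq_leadingMinor]
  refine ⟨?_, fun h => ?_⟩
  · rintro n₁ (rfl | rfl)
    · simpa [leadingMinor] using leadingMinor_reducedEntry_mul_add (k + 1) n₁ 0
    · simpa [leadingMinor, reducedEntry_of_lt] using leadingMinor_reducedEntry_mul_add (k + 1) n₁ 1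
  · have hr₁ : 1 < n % (k + 1) := Nat.one_lt_iff_ne_zero_and_ne_one.2 h
    have hr₂ : n % (k + 1) < k + 1 := n.mod_lt k.succ_pos
    rw [← Nat.div_add_mod n (k + 1), leadingMinor_reducedEntry_mul_add,
      leadingMinor_reducedEntry_of_lt hr₁ hr₂, mul_zero]
end

section
/- For all positive integers n and non-negative integers k, the determinant of the n×n matrix whose (i,j) entry is the sum over l from -k to k+1 of binomial(2i+2j, i+j+l) equals (-1)^{n_1 * binomial(k+1,2)} if n = (k+1)n_1 or n = (k+1)n_1 + 1 for some non-negative integer n_1, and equals 0 otherwise. -/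
/-!
Put `K = k + 1`, `w = z + z⁻¹` and `E = ∑_{-K ≤ l < K} z ^ l`. The `(i, j)` entry is the constant
term of `(w + 2) ^ (i + j) * E`, so the matrix is the Gram matrix of the family `(w + 2) ^ i` for
the symmetric form `⟨p, q⟩ = CT (p(w) * q(w) * E)`, and its determinant does not change when rows
and columns are indexed by any other monic polynomials of degrees `0, 1, 2, …`.

Because `E * (z - 1) = z ^ K - z ^ (-K)`, Chebyshev polynomials in `z ^ K + z ^ (-K)`, multiplied by
suitable Chebyshev polynomials of degree less than `K`, make this Gram matrix explicit: its first
column consists of ones and the rest of it is supported on antidiagonals of `K × K` blocks.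
Subtracting the first row from all rows past the `K`-th peels off one block, which contributes
`(-1) ^ (K choose 2)`. A remainder of size at least two and less than `K` has two equal rows.
-/

namespace CentralBinomialHankel

section ChangeOfBasis

open Polynomial

variable {R : Type*} [CommRing R]

theorem eq_sum_fin_smul_X_pow {n : ℕ} {p : R[X]} (hp : p.natDegree < n) :
    p = ∑ r : Fin n, p.coeff r • X ^ (r : ℕ) := by
  conv_lhs => rw [p.as_sum_range' n hp, Finset.sum_range]
  simp only [smul_X_eq_monomial]

theorem det_bilin_of_isMonicOfDegree (B : R[X] →ₗ[R] R[X] →ₗ[R] R) {p q : ℕ → R[X]}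
    (hp : ∀ i, IsMonicOfDegree (p i) i) (hq : ∀ j, IsMonicOfDegree (q j) j) (n : ℕ) :
    (Matrix.of fun i j : Fin n => B (p i) (q j)).det =
      (Matrix.of fun i j : Fin n => B (X ^ (i : ℕ)) (X ^ (j : ℕ))).det := by
  have expand {f : ℕ → R[X]} (hf : ∀ i, IsMonicOfDegree (f i) i) (i : Fin n) :
      f i = ∑ r : Fin n, (f i).coeff r • X ^ (r : ℕ) :=
    eq_sum_fin_smul_X_pow ((hf i).natDegree_eq.trans_lt i.isLt)
  have factor : (Matrix.of fun i j : Fin n => B (p i) (q j)) =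
      (Matrix.of fun i j : Fin n => (p j).coeff i).transpose *
        (Matrix.of fun i j : Fin n => B (X ^ (i : ℕ)) (X ^ (j : ℕ))) *
        (Matrix.of fun i j : Fin n => (q j).coeff i) := by
    ext i j
    rw [Matrix.of_apply, expand hp i, expand hq j]
    simp only [Matrix.mul_apply, Matrix.transpose_apply, Matrix.of_apply, map_sum, map_smul,
      LinearMap.sum_apply, LinearMap.smul_apply, smul_eq_mul, Finset.sum_mul, Finset.mul_sum]
    refine Finset.sum_congr rfl fun s _ => Finset.sum_congr rfl fun r _ => ?_
    ring
  have det_coeff {f : ℕ → R[X]} (hf : ∀ i, IsMonicOfDegree (f i) i) :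
      (Matrix.of fun i j : Fin n => (f j).coeff i).det = 1 :=
    (Matrix.det_matrixOfPolynomials (fun j : Fin n => f j) (fun j => (hf j).natDegree_eq)
      fun j => (hf j).monic).symm ▸ rfl
  rw [factor, Matrix.det_mul, Matrix.det_mul, Matrix.det_transpose, det_coeff hp, det_coeff hq,
    one_mul, mul_one]

end ChangeOfBasis

section GramDeterminant

open Matrix

variable {R : Type*} [CommRing R]

theorem det_antidiagonal (n : ℕ) (c : R) :
    (of fun i j : Fin n => if (i : ℕ) + j + 1 = n then c else 0).det =
      (-1) ^ n.choose 2 * c ^ n := by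
  induction n with
  | zero => simp
  | succ n ih =>
    have minor : (of fun i j : Fin (n + 1) => if (i : ℕ) + j + 1 = n + 1 then c else 0).submatrix
        Fin.succ (Fin.last n).succAbove =
        of fun i j : Fin n => if (i : ℕ) + j + 1 = n then c else 0 := by
      ext i j
      simp only [submatrix_apply, of_apply, Fin.succAbove_last, Fin.val_succ, Fin.val_castSucc]
      exact if_congr (by omega) rfl rfl
    rw [det_succ_row_zero, Finset.sum_eq_single (Fin.last n), minor, ih]
    · rw [of_apply, if_pos (by rw [Fin.val_zero, Fin.val_last, zero_add]), Fin.val_last,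
        Nat.choose_succ_succ', Nat.choose_one_right, pow_add]
      ring
    · intro j _ hj
      have : (j : ℕ) ≠ n := fun h => hj (Fin.ext h)
      simp [this]
    · simp

variable (R) in
/-- The entries of the Gram matrix of the form `(p, q) ↦ windowMoment R K (p * q)` in the bases
`rowBasis` and `colBasis`. -/
def gramEntry (K i : ℕ) : ℕ → R
  | 0 => 1
  | j + 1 => if i / K = j / K ∧ i % K + j % K + 1 = K then -1 else 0

variable (R) in
/-- The `n × n` Gram matrix with entries `gramEntry`. -/
def gramMatrix (K n : ℕ) : Matrix (Fin n) (Fin n) R :=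
  of fun i j => gramEntry R K i j

variable {K : ℕ}

theorem gramEntry_succ_of_lt {i j : ℕ} (hi : i < K) (hj : j < K) :
    gramEntry R K i (j + 1) = if i + j + 1 = K then -1 else 0 := by
  simp [gramEntry, Nat.div_eq_of_lt, Nat.mod_eq_of_lt, hi, hj]

theorem det_gramMatrix_of_lt {r : ℕ} (hr : 2 ≤ r) (hrK : r < K) :
    (gramMatrix R K r).det = 0 := by
  refine det_zero_of_row_eq (i := ⟨0, by omega⟩) (j := ⟨1, by omega⟩) (by simp) ?_
  funext ⟨j, hj⟩
  rcases j with _ | j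
  · rfl
  · simp only [gramMatrix, of_apply]
    rw [gramEntry_succ_of_lt (by omega) (by omega), gramEntry_succ_of_lt (by omega) (by omega),
      if_neg (by omega), if_neg (by omega)]

variable [NeZero K]

theorem gramEntry_add_left_of_lt (i : ℕ) {j : ℕ} (hj : j < K) :
    gramEntry R K (K + i) j = gramEntry R K 0 j := by
  have hK := NeZero.pos K
  cases j with
  | zero => rfl
  | succ j =>
    have hj' : j / K = 0 := Nat.div_eq_of_lt (by omega)
    rw [gramEntry_succ_of_lt hK (by omega), if_neg (by omega), gramEntry, if_neg]
    simp [Nat.add_div_left i hK, hj']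

theorem gramEntry_add_add (i j : ℕ) :
    gramEntry R K (K + i) (K + j) = gramEntry R K i j + gramEntry R K 0 (K + j) := by
  have hK := NeZero.pos K
  cases j with
  | zero =>
    obtain ⟨k, rfl⟩ := Nat.exists_eq_add_one.mpr hK
    have upper : gramEntry R (k + 1) 0 (k + 1) = -1 := by
      rw [gramEntry_succ_of_lt hK k.lt_succ_self, zero_add, if_pos rfl]
    have lower : gramEntry R (k + 1) (k + 1 + i) (k + 1) = 0 := by
      simp [gramEntry, Nat.add_div_left i hK, Nat.div_eq_of_lt k.lt_succ_self]
    rw [add_zero, upper, lower, gramEntry, add_neg_cancel]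
  | succ j =>
    rw [← add_assoc]
    simp [gramEntry, Nat.add_div_left _ hK, NeZero.ne]

theorem det_gramMatrix_add (n : ℕ) :
    (gramMatrix R K (K + n)).det = (gramMatrix R K K).det * (gramMatrix R K n).det := by
  rw [← det_submatrix_equiv_self finSumFinEquiv, ← det_fromBlocks_zero₂₁ _
    (of fun (i : Fin K) (j : Fin n) => gramEntry R K i (K + j))]
  refine det_eq_of_forall_row_eq_smul_add_const (Sum.elim 0 1) (Sum.inl 0) rfl ?_
  rintro (i | i) (j | j)
  · simp [gramMatrix]
  · simp [gramMatrix]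
  · simp [gramMatrix, gramEntry_add_left_of_lt]
  · simp [gramMatrix, gramEntry_add_add]

theorem det_gramMatrix_self : (gramMatrix R K K).det = (-1) ^ K.choose 2 := by
  obtain ⟨k, rfl⟩ := Nat.exists_eq_add_one.mpr (NeZero.pos K)
  have minor : (gramMatrix R (k + 1) (k + 1)).submatrix Fin.succ (Fin.succAbove 0) =
      of fun i j : Fin k => if (i : ℕ) + j + 1 = k then -1 else 0 := by
    ext i j
    simp only [submatrix_apply, gramMatrix, of_apply, Fin.succAbove_zero, Fin.val_succ]
    rw [gramEntry_succ_of_lt (by omega) (by omega)]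
    exact if_congr (by omega) rfl rfl
  have row_zero (j : Fin k) : gramMatrix R (k + 1) (k + 1) 0 j.succ = 0 := by
    rw [gramMatrix, of_apply, Fin.val_succ, Fin.val_zero,
      gramEntry_succ_of_lt k.succ_pos (by omega), if_neg (by omega)]
  rw [det_succ_row_zero, Fin.sum_univ_succ, minor, det_antidiagonal]
  simp only [row_zero, mul_zero, zero_mul, Finset.sum_const_zero, add_zero, Fin.val_zero, pow_zero,
    one_mul]
  rw [gramMatrix, of_apply, Fin.val_zero, gramEntry, one_mul, ← pow_add,
    Nat.choose_succ_succ', Nat.choose_one_right, add_comm]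

theorem det_gramMatrix_mul_add (m r : ℕ) :
    (gramMatrix R K (K * m + r)).det =
      (-1) ^ (m * K.choose 2) * (gramMatrix R K r).det := by
  induction m with
  | zero => rw [mul_zero, zero_add, zero_mul, pow_zero, one_mul]
  | succ m ih =>
    rw [show K * (m + 1) + r = K + (K * m + r) by ring, det_gramMatrix_add, ih,
      det_gramMatrix_self]
    ring

theorem det_gramMatrix_mul (m : ℕ) :
    (gramMatrix R K (K * m)).det = (-1) ^ (m * K.choose 2) := by
  have h := det_gramMatrix_mul_add (R := R) (K := K) m 0
  rwa [add_zero, det_isEmpty (n := Fin 0), mul_one] at h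

theorem det_gramMatrix_mul_add_one (m : ℕ) :
    (gramMatrix R K (K * m + 1)).det = (-1) ^ (m * K.choose 2) := by
  rw [det_gramMatrix_mul_add, det_fin_one, gramMatrix, of_apply, Fin.val_zero, gramEntry,
    mul_one]

theorem det_gramMatrix_eq_zero {n : ℕ} (h₀ : n % K ≠ 0) (h₁ : n % K ≠ 1) :
    (gramMatrix R K n).det = 0 := by
  rw [← Nat.div_add_mod n K, det_gramMatrix_mul_add,
    det_gramMatrix_of_lt (by omega) (Nat.mod_lt n (NeZero.pos K)), mul_zero]

end GramDeterminant

section Chebyshev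

open Polynomial

variable {R : Type*} [CommRing R]

theorem chebyshev_C_eq_S_sub_S (n : ℤ) :
    Chebyshev.C R n = Chebyshev.S R n - Chebyshev.S R (n - 2) := by
  linear_combination Chebyshev.C_eq_S_sub_X_mul_S R n + Chebyshev.S_eq R n

variable (R) in
/-- The Chebyshev polynomials of the third kind, normalised to be monic:
`chebyshevV R n` is `V_n(X / 2)`. -/
noncomputable def chebyshevV (n : ℤ) : R[X] := Chebyshev.S R n - Chebyshev.S R (n - 1)

variable [Nontrivial R]

theorem isMonicOfDegree_chebyshev_S (n : ℕ) : IsMonicOfDegree (Chebyshev.S R n) n := by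
  induction n using Nat.twoStepInduction with
  | zero => simp
  | one => simpa using isMonicOfDegree_X R
  | more n ih₀ ih₁ =>
    push_cast at ih₁ ⊢
    rw [Chebyshev.S_add_two, add_comm n 2, show 2 + n = 1 + (n + 1) by ring]
    exact ((isMonicOfDegree_X R).mul ih₁).sub (by rw [ih₀.natDegree_eq]; omega)

theorem natDegree_chebyshev_S_lt {n : ℕ} {m : ℤ} (hn : n ≠ 0) (hm : -1 ≤ m) (hmn : m < n) :
    (Chebyshev.S R m).natDegree < n := by
  obtain rfl | hm := hm.eq_or_lt
  · rwa [Chebyshev.S_neg_one, natDegree_zero, Nat.pos_iff_ne_zero]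
  · lift m to ℕ using by omega
    rw [(isMonicOfDegree_chebyshev_S m).natDegree_eq]
    exact_mod_cast hmn

theorem isMonicOfDegree_chebyshev_C {n : ℕ} (hn : n ≠ 0) :
    IsMonicOfDegree (Chebyshev.C R n) n := by
  rw [chebyshev_C_eq_S_sub_S]
  exact (isMonicOfDegree_chebyshev_S n).sub
    (natDegree_chebyshev_S_lt hn (by omega) (by omega))

theorem isMonicOfDegree_chebyshevV (n : ℕ) : IsMonicOfDegree (chebyshevV R n) n := by
  obtain rfl | hn := eq_or_ne n 0
  · simp [chebyshevV]
  · exact (isMonicOfDegree_chebyshev_S n).sub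
      (natDegree_chebyshev_S_lt hn (by omega) (by omega))

theorem isMonicOfDegree_chebyshev_C_sub_C (n : ℕ) :
    IsMonicOfDegree (Chebyshev.C R (n + 1) - Chebyshev.C R n) (n + 1) := by
  refine (isMonicOfDegree_chebyshev_C n.succ_ne_zero).sub ?_
  obtain rfl | hn := eq_or_ne n 0
  · simp
  · rw [(isMonicOfDegree_chebyshev_C hn).natDegree_eq]
    exact n.lt_succ_self

end Chebyshev

section Bases

open Polynomial

variable (R : Type*) [CommRing R] (K : ℕ)

/-- The monic polynomials indexing the rows of the Gram matrix: `V_b * S_a(C_K)` in degree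
`a * K + b`, where `b < K`. -/
noncomputable def rowBasis (i : ℕ) : R[X] :=
  chebyshevV R (i % K : ℕ) * (Chebyshev.S R (i / K : ℕ)).comp (Chebyshev.C R K)

/-- The monic polynomials indexing the columns of the Gram matrix: `1` in degree `0`, and
`(C_{c+1} - C_c) * S_d(C_K)` in degree `d * K + c + 1`, where `c < K`. -/
noncomputable def colBasis : ℕ → R[X]
  | 0 => 1
  | j + 1 => (Chebyshev.C R ((j % K : ℕ) + 1) - Chebyshev.C R (j % K : ℕ)) *
      (Chebyshev.S R (j / K : ℕ)).comp (Chebyshev.C R K)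

variable {R K} [Nontrivial R] [NeZero K]

theorem isMonicOfDegree_S_comp_C (a : ℕ) :
    IsMonicOfDegree ((Chebyshev.S R a).comp (Chebyshev.C R K)) (a * K) :=
  (isMonicOfDegree_chebyshev_S a).comp (NeZero.ne K) (isMonicOfDegree_chebyshev_C (NeZero.ne K))

theorem isMonicOfDegree_rowBasis (i : ℕ) : IsMonicOfDegree (rowBasis R K i) i := by
  have h := (isMonicOfDegree_chebyshevV (R := R) (i % K)).mul
    (isMonicOfDegree_S_comp_C (R := R) (K := K) (i / K))
  rwa [Nat.mod_add_div'] at h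

theorem isMonicOfDegree_colBasis : ∀ j, IsMonicOfDegree (colBasis R K j) j
  | 0 => isMonicOfDegree_zero_iff.mpr rfl
  | j + 1 => by
    have h := (isMonicOfDegree_chebyshev_C_sub_C (R := R) (j % K)).mul
      (isMonicOfDegree_S_comp_C (R := R) (K := K) (j / K))
    rwa [add_right_comm, Nat.mod_add_div'] at h

end Bases

section Laurent

open Polynomial LaurentPolynomial

variable {R : Type*} [CommRing R]

theorem T_one_mul_T_neg_one : (T 1 * T (-1) : R[T;T⁻¹]) = 1 := by
  rw [← T_add, add_neg_cancel, T_zero]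

theorem T_sub_T_ne_zero [Nontrivial R] {m n : ℤ} (h : m ≠ n) : (T m - T n : R[T;T⁻¹]) ≠ 0 := by
  intro h0
  have := congrArg (fun f : R[T;T⁻¹] => f.coeff m) (sub_eq_zero.mp h0)
  simp [h.symm] at this

theorem coeff_T_mul (m n : ℤ) (f : R[T;T⁻¹]) : (T m * f).coeff n = f.coeff (n - m) := by
  rw [T, AddMonoidAlgebra.coeff_single_mul_apply, one_mul, neg_add_eq_sub]

theorem coeff_T_sub_T_neg_mul (e : ℤ) (f : R[T;T⁻¹]) :
    ((T e - T (-e)) * f).coeff 0 = f.coeff (-e) - f.coeff e := by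
  rw [sub_mul, AddMonoidAlgebra.coeff_sub, Finsupp.sub_apply, coeff_T_mul, coeff_T_mul, zero_sub,
    zero_sub, neg_neg]

/-- The Joukowsky substitution `p(X) ↦ p(z + z⁻¹)`, with `z = T 1`; it identifies polynomials with
Laurent polynomials invariant under `z ↦ z⁻¹`. -/
noncomputable def joukowsky : R[X] →ₐ[R] R[T;T⁻¹] := aeval (T 1 + T (-1))

theorem joukowsky_X : joukowsky (X : R[X]) = T 1 + T (-1) := aeval_X _

theorem invert_joukowsky (p : R[X]) : invert (joukowsky p) = joukowsky p := by
  have h : (invert (R := R)).toAlgHom.comp joukowsky = joukowsky := by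
    ext
    simp [joukowsky_X, add_comm]
  exact DFunLike.congr_fun h p

theorem joukowsky_C (n : ℤ) : joukowsky (Chebyshev.C R n) = T n + T (-n) := by
  induction n using Chebyshev.induct' with
  | zero => simp [one_add_one_eq_two, map_ofNat]
  | one => simp [joukowsky_X]
  | add_two n ih₁ ih₀ =>
    rw [Chebyshev.C_add_two, map_sub, map_mul, joukowsky_X, ih₁, ih₀,
      show (n + 2 : ℤ) = n + 1 + 1 by ring]
    simp only [neg_add, T_add]
    linear_combination (T (n : ℤ) + T (-(n : ℤ))) * T_one_mul_T_neg_one (R := R)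
  | neg n ih => rw [Chebyshev.C_neg, ih, neg_neg, add_comm]

theorem joukowsky_S_mul (n : ℤ) :
    joukowsky (Chebyshev.S R n) * (T 1 - T (-1)) = T (n + 1) - T (-(n + 1)) := by
  induction n using Chebyshev.induct with
  | zero => simp
  | one =>
    rw [Chebyshev.S_one, joukowsky_X, neg_add, T_add, T_add]
    ring
  | add_two n ih₁ ih₀ =>
    rw [Chebyshev.S_add_two, map_sub, map_mul, joukowsky_X, sub_mul, mul_assoc, ih₁, ih₀,
      show (n + 2 : ℤ) = n + 1 + 1 by ring]
    simp only [neg_add, T_add]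
    linear_combination
      (T 1 * T (n : ℤ) - T (-1) * T (-(n : ℤ))) * T_one_mul_T_neg_one (R := R)
  | neg_add_one n ih₀ ih₁ =>
    rw [Chebyshev.S_sub_one, map_sub, map_mul, joukowsky_X, sub_mul, mul_assoc, ih₀, ih₁]
    simp only [neg_add, sub_eq_add_neg, neg_neg, T_add]
    ring

theorem joukowsky_chebyshevV_mul [IsDomain R] (n : ℤ) :
    joukowsky (chebyshevV R n) * (T 1 + 1) = T (n + 1) + T (-n) := by
  have hn := joukowsky_S_mul (R := R) n
  have hn' := joukowsky_S_mul (R := R) (n - 1)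
  apply mul_right_cancel₀ (T_sub_T_ne_zero (R := R) (show (1 : ℤ) ≠ -1 by decide))
  rw [chebyshevV, map_sub]
  rw [sub_add_cancel] at hn'
  simp only [neg_add, T_add] at hn ⊢
  linear_combination (T 1 + 1) * (hn - hn') + (T n - T (-n)) * T_one_mul_T_neg_one (R := R)

theorem joukowsky_C_sub_C (n : ℤ) :
    joukowsky (Chebyshev.C R (n + 1) - Chebyshev.C R n) = (T n - T (-(n + 1))) * (T 1 - 1) := by
  rw [map_sub, joukowsky_C, joukowsky_C]
  simp only [neg_add, T_add]
  linear_combination T (-(n : ℤ)) * T_one_mul_T_neg_one (R := R)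

variable (R) in
/-- The substitution `f(z) ↦ f(z ^ K)` on Laurent polynomials. -/
noncomputable def dilate (K : ℤ) : R[T;T⁻¹] →ₐ[R] R[T;T⁻¹] :=
  AddMonoidAlgebra.mapDomainAlgHom R R (AddMonoidHom.mulLeft K)

theorem dilate_T (K n : ℤ) : dilate R K (T n) = T (K * n) :=
  AddMonoidAlgebra.mapDomain_single

theorem coeff_dilate_mul {K : ℤ} (hK : K ≠ 0) (f : R[T;T⁻¹]) (n : ℤ) :
    (dilate R K f).coeff (K * n) = f.coeff n :=
  Finsupp.mapDomain_apply (mul_right_injective₀ hK) f.coeff n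

theorem coeff_dilate_of_not_dvd {K n : ℤ} (h : ¬ K ∣ n) (f : R[T;T⁻¹]) :
    (dilate R K f).coeff n = 0 :=
  Finsupp.mapDomain_of_notMem_range f.coeff n fun ⟨m, hm⟩ => h ⟨m, hm.symm⟩

theorem joukowsky_comp_C (K : ℤ) (p : R[X]) :
    joukowsky (p.comp (Chebyshev.C R K)) = dilate R K (joukowsky p) := by
  have h : dilate R K (T 1 + T (-1)) = joukowsky (Chebyshev.C R K) := by
    rw [map_add, dilate_T, dilate_T, joukowsky_C, mul_one, mul_neg_one]
  rw [comp_eq_aeval, ← aeval_algHom_apply, ← h, aeval_algHom_apply, joukowsky]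

variable (R) in
/-- The kernel `∑_{-N ≤ l < N} z ^ l`, which turns the constant term of a product into a sum of
`2 * N` consecutive coefficients. -/
noncomputable def window (N : ℕ) : R[T;T⁻¹] := ∑ l ∈ Finset.Ico (-N : ℤ) N, T l

theorem coeff_window (N : ℕ) (n : ℤ) :
    (window R N).coeff n = if -N ≤ n ∧ n < N then 1 else 0 := by
  simp [window, AddMonoidAlgebra.coeff_sum]

theorem invert_window (N : ℕ) : invert (window R N) = T 1 * window R N := by
  ext n
  rw [invert_apply, coeff_T_mul, coeff_window, coeff_window]
  exact if_congr (by omega) rfl rfl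

theorem window_mul (N : ℕ) : window R N * (T 1 - 1) = T N - T (-N) := by
  ext n
  rw [mul_comm, sub_mul, one_mul]
  simp only [AddMonoidAlgebra.coeff_sub, Finsupp.sub_apply, coeff_T_mul, coeff_window, T_apply]
  split_ifs <;> first | omega | simp

theorem dilate_S_mul_window [IsDomain R] (K a : ℕ) :
    dilate R K (joukowsky (Chebyshev.S R a)) * window R K = window R (K * (a + 1)) := by
  apply mul_right_cancel₀ (T_sub_T_ne_zero (R := R) one_ne_zero)
  rw [T_zero, mul_assoc, window_mul, window_mul]
  have h := congrArg (dilate R K) (joukowsky_S_mul (R := R) a)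
  simpa only [map_mul, map_sub, dilate_T, mul_one, mul_neg, mul_neg_one,
    Nat.cast_mul, Nat.cast_add, Nat.cast_one] using h

variable (R) in
/-- The moment functional `p ↦ CT (p(z + z⁻¹) * ∑_{-K ≤ l < K} z ^ l)`, where `CT` is the constant
term. -/
noncomputable def windowMoment (K : ℕ) : R[X] →ₗ[R] R :=
  Finsupp.lapply 0 ∘ₗ (AddMonoidAlgebra.coeffLinearEquiv R).toLinearMap ∘ₗ
    LinearMap.mulRight R (window R K) ∘ₗ joukowsky.toLinearMap

theorem windowMoment_apply (K : ℕ) (p : R[X]) :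
    windowMoment R K p = (joukowsky p * window R K).coeff 0 := rfl

/-- Averaging over `z ↦ z⁻¹`, which fixes `p(z + z⁻¹)` and multiplies the window by `z`. -/
theorem two_mul_windowMoment (K : ℕ) (p : R[X]) :
    2 * windowMoment R K p = (joukowsky p * (T 1 + 1) * window R K).coeff 0 := by
  have h : (joukowsky p * (T 1 * window R K)).coeff 0 = windowMoment R K p := by
    rw [← invert_window, ← invert_joukowsky, ← map_mul, invert_apply, neg_zero, windowMoment_apply]
  rw [mul_assoc, add_mul, one_mul, mul_add, AddMonoidAlgebra.coeff_add, Finsupp.add_apply, h,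
    ← windowMoment_apply, two_mul]

theorem coeff_joukowsky_S_mul_S (a b : ℕ) :
    (joukowsky (Chebyshev.S R a) * joukowsky (Chebyshev.S R b) * (T 1 - T (-1)) ^ 2).coeff 0 =
      if a = b then -2 else 0 := by
  rw [pow_two, mul_mul_mul_comm, joukowsky_S_mul, joukowsky_S_mul, coeff_T_sub_T_neg_mul]
  simp only [AddMonoidAlgebra.coeff_sub, Finsupp.sub_apply, T_apply]
  split_ifs <;> first | omega | norm_num

theorem coeff_dilate_neg_of_abs_lt {K e : ℤ} (he : |e| < K) (f : R[T;T⁻¹]) :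
    (dilate R K f).coeff (-e) = (dilate R K f).coeff e := by
  obtain rfl | h := eq_or_ne e 0
  · rw [neg_zero]
  · have hK : ¬ K ∣ e := fun hd => h (Int.eq_zero_of_abs_lt_dvd hd he)
    rw [coeff_dilate_of_not_dvd hK, coeff_dilate_of_not_dvd (by rwa [dvd_neg])]

theorem coeff_dilate_neg_sub_of_lt_two_mul {K e : ℤ} (he : 0 < e) (heK : e < 2 * K)
    (f : R[T;T⁻¹]) :
    (dilate R K f).coeff (-e) - (dilate R K f).coeff e =
      if e = K then f.coeff (-1) - f.coeff 1 else 0 := by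
  split_ifs with h
  · subst h
    rw [← coeff_dilate_mul he.ne' f (-1), ← coeff_dilate_mul he.ne' f 1, mul_neg_one, mul_one]
  · have hK : ¬ K ∣ e := by
      rintro ⟨c, rfl⟩
      have hc : 0 < c := by nlinarith
      have hc' : c < 2 := by nlinarith
      exact h (by rw [show c = 1 by omega, mul_one])
    rw [coeff_dilate_of_not_dvd hK, coeff_dilate_of_not_dvd (by rwa [dvd_neg]), sub_zero]

end Laurent

section Gram

open Polynomial LaurentPolynomial

variable {R : Type*} [CommRing R] [IsDomain R] [NeZero (2 : R)] {K : ℕ}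

theorem windowMoment_chebyshevV {b : ℕ} (hb : b < K) (a : ℕ) :
    windowMoment R K (chebyshevV R b * (Chebyshev.S R a).comp (Chebyshev.C R K)) = 1 := by
  have collapse :
      joukowsky (chebyshevV R b * (Chebyshev.S R a).comp (Chebyshev.C R K)) * (T 1 + 1) *
          window R K =
        (T (b + 1) + T (-b)) * window R (K * (a + 1)) := by
    rw [map_mul, joukowsky_comp_C, ← dilate_S_mul_window, ← joukowsky_chebyshevV_mul]
    ring
  have hN : K ≤ K * (a + 1) := Nat.le_mul_of_pos_right K a.succ_pos
  apply mul_left_cancel₀ (two_ne_zero (α := R))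
  rw [two_mul_windowMoment, collapse, add_mul, AddMonoidAlgebra.coeff_add, Finsupp.add_apply,
    coeff_T_mul, coeff_T_mul, coeff_window, coeff_window, if_pos (by omega), if_pos (by omega),
    one_add_one_eq_two, mul_one]

theorem windowMoment_chebyshevV_mul_C_sub_C {b c : ℕ} (hb : b < K) (hc : c < K) (a d : ℕ) :
    windowMoment R K (chebyshevV R b * (Chebyshev.S R a).comp (Chebyshev.C R K) *
        ((Chebyshev.C R (c + 1) - Chebyshev.C R c) *
          (Chebyshev.S R d).comp (Chebyshev.C R K))) =
      if a = d ∧ b + c + 1 = K then -1 else 0 := by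
  set h : R[T;T⁻¹] :=
    joukowsky (Chebyshev.S R a) * joukowsky (Chebyshev.S R d) * (T 1 - T (-1)) with hh
  have collapse :
      joukowsky (chebyshevV R b * (Chebyshev.S R a).comp (Chebyshev.C R K) *
          ((Chebyshev.C R (c + 1) - Chebyshev.C R c) *
            (Chebyshev.S R d).comp (Chebyshev.C R K))) * (T 1 + 1) * window R K =
        (T (b + c + 1) - T (-(b + c + 1))) * dilate R K h -
          (T (b - c) - T (-(b - c))) * dilate R K h := by
    have hE : dilate R K h = dilate R K (joukowsky (Chebyshev.S R a)) *
        dilate R K (joukowsky (Chebyshev.S R d)) * (window R K * (T 1 - 1)) := by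
      rw [window_mul, hh, map_mul, map_mul, map_sub, dilate_T, dilate_T, mul_one, mul_neg_one]
    have hT : (T (b + 1) + T (-b)) * (T c - T (-(c + 1))) =
        (T (b + c + 1) - T (-(b + c + 1)) - (T (b - c) - T (-(b - c))) : R[T;T⁻¹]) := by
      simp only [add_mul, mul_sub, ← T_add]
      ring_nf
    rw [← sub_mul, ← hT, hE, ← joukowsky_chebyshevV_mul]
    simp only [map_mul, joukowsky_comp_C, joukowsky_C_sub_C]
    ring
  apply mul_left_cancel₀ (two_ne_zero (α := R))
  rw [two_mul_windowMoment, collapse, AddMonoidAlgebra.coeff_sub, Finsupp.sub_apply,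
    coeff_T_sub_T_neg_mul, coeff_T_sub_T_neg_mul,
    coeff_dilate_neg_of_abs_lt (e := b - c) (by rw [abs_lt]; omega), sub_self, sub_zero,
    coeff_dilate_neg_sub_of_lt_two_mul (by omega) (by omega), ← coeff_T_sub_T_neg_mul,
    mul_comm (_ - _), hh, mul_assoc, ← pow_two, coeff_joukowsky_S_mul_S]
  split_ifs <;> first | omega | norm_num

variable [NeZero K]

theorem windowMoment_rowBasis_mul_colBasis (i j : ℕ) :
    windowMoment R K (rowBasis R K i * colBasis R K j) = gramEntry R K i j := by
  have hi := Nat.mod_lt i (NeZero.pos K)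
  cases j with
  | zero =>
    rw [colBasis, mul_one, gramEntry]
    exact windowMoment_chebyshevV hi (i / K)
  | succ j =>
    exact windowMoment_chebyshevV_mul_C_sub_C hi (Nat.mod_lt j (NeZero.pos K)) (i / K) (j / K)

theorem det_windowMoment_mul {p : ℕ → R[X]} (hp : ∀ i, IsMonicOfDegree (p i) i) (n : ℕ) :
    (Matrix.of fun i j : Fin n => windowMoment R K (p i * p j)).det =
      (gramMatrix R K n).det := by
  have change_basis {p q : ℕ → R[X]} (hp : ∀ i, IsMonicOfDegree (p i) i)
      (hq : ∀ j, IsMonicOfDegree (q j) j) :=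
    det_bilin_of_isMonicOfDegree ((LinearMap.mul R R[X]).compr₂ (windowMoment R K)) hp hq n
  have gram := (change_basis hp hp).trans
    (change_basis (isMonicOfDegree_rowBasis (K := K)) (isMonicOfDegree_colBasis (K := K))).symm
  simpa only [gramMatrix, LinearMap.compr₂_apply, LinearMap.mul_apply',
    windowMoment_rowBasis_mul_colBasis] using gram

end Gram

section Hankel

open Polynomial LaurentPolynomial

variable {R : Type*} [CommRing R]

theorem joukowsky_X_add_two_pow (m : ℕ) :
    joukowsky ((X + 2 : R[X]) ^ m) = T (-m) * toLaurent ((X + 1) ^ (2 * m)) := by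
  have h : joukowsky (X + 2 : R[X]) = T (-1) * toLaurent (X + 1) ^ 2 := by
    rw [map_add, joukowsky_X, map_ofNat, map_add, toLaurent_X, map_one]
    linear_combination -(T 1 + 2) * T_one_mul_T_neg_one (R := R)
  rw [map_pow, h, mul_pow, T_pow, map_pow, ← pow_mul, mul_neg_one]

theorem coeff_toLaurent_eq_ite (p : R[X]) (n : ℤ) :
    (toLaurent p).coeff n = if 0 ≤ n then p.coeff n.toNat else 0 := by
  rw [coeff_toLaurent]
  split_ifs with h
  · lift n to ℕ using h
    exact Finsupp.mapDomain_apply Nat.castEmbedding.injective _ n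
  · refine Finsupp.mapDomain_of_notMem_range _ _ ?_
    rintro ⟨m, rfl⟩
    exact h m.cast_nonneg

theorem coeff_joukowsky_X_add_two_pow (m : ℕ) (l : ℤ) :
    (joukowsky ((X + 2 : R[X]) ^ m)).coeff l = chz (2 * m) (m + l) := by
  rw [joukowsky_X_add_two_pow, coeff_T_mul, sub_neg_eq_add, coeff_toLaurent_eq_ite,
    coeff_X_add_one_pow, add_comm l, chz]
  split_ifs with h₀ h h
  · rw [Int.cast_natCast, show (2 * (m : ℤ)).toNat = 2 * m by omega]
  · rw [Nat.choose_eq_zero_of_lt (by omega), Nat.cast_zero, Int.cast_zero]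
  · exact absurd h.1 h₀
  · exact Int.cast_zero.symm

theorem windowMoment_X_add_two_pow (K m : ℕ) :
    windowMoment R K ((X + 2) ^ m) =
      ∑ l ∈ Finset.Ioc (-K : ℤ) K, (chz (2 * m) (m + l) : R) := by
  rw [windowMoment_apply, mul_comm, window, Finset.sum_mul, AddMonoidAlgebra.coeff_sum,
    Finsupp.finsetSum_apply]
  simp only [coeff_T_mul, coeff_joukowsky_X_add_two_pow]
  refine Finset.sum_nbij' (fun l => -l) (fun l => -l) ?_ ?_ ?_ ?_ ?_ <;>
    simp only [Finset.mem_Ico, Finset.mem_Ioc, neg_neg, zero_sub, implies_true] <;> omega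

theorem det_hankel_eq_det_gramMatrix (n k : ℕ) :
    (Matrix.of fun i j : Fin n =>
      ∑ l ∈ Finset.Icc (-(k : ℤ)) ((k : ℤ) + 1),
        chz (2 * (i.1 : ℤ) + 2 * j.1) ((i.1 : ℤ) + j.1 + l)).det =
      (gramMatrix ℤ (k + 1) n).det := by
  have monic (i : ℕ) : IsMonicOfDegree ((X + 2 : ℤ[X]) ^ i) i := by
    simpa using (isMonicOfDegree_X_add_one (2 : ℤ)).pow i
  have interval : Finset.Icc (-(k : ℤ)) (k + 1) = Finset.Ioc (-((k + 1 : ℕ) : ℤ)) (k + 1 : ℕ) := by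
    ext l
    simp only [Finset.mem_Icc, Finset.mem_Ioc]
    omega
  rw [← det_windowMoment_mul monic]
  congr 1
  ext i j
  rw [Matrix.of_apply, Matrix.of_apply, ← pow_add, windowMoment_X_add_two_pow, interval]
  push_cast
  simp only [mul_add]

end Hankel

end CentralBinomialHankel

theorem hankel_det_sum_central_binomials (n k : ℕ) (hn : 0 < n) :
    (∀ n₁ : ℕ, n = (k + 1) * n₁ ∨ n = (k + 1) * n₁ + 1 →
      (Matrix.of fun i j : Fin n =>
        ∑ l ∈ Finset.Icc (-(k : ℤ)) ((k : ℤ) + 1),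
          chz (2 * (i.1 : ℤ) + 2 * j.1) ((i.1 : ℤ) + j.1 + l)).det =
        (-1) ^ (n₁ * Nat.choose (k + 1) 2)) ∧
    (n % (k + 1) ≠ 0 ∧ n % (k + 1) ≠ 1 →
      (Matrix.of fun i j : Fin n =>
        ∑ l ∈ Finset.Icc (-(k : ℤ)) ((k : ℤ) + 1),
          chz (2 * (i.1 : ℤ) + 2 * j.1) ((i.1 : ℤ) + j.1 + l)).det = 0) := by
  rw [CentralBinomialHankel.det_hankel_eq_det_gramMatrix]
  refine ⟨?_, fun h => CentralBinomialHankel.det_gramMatrix_eq_zero h.1 h.2⟩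
  rintro n₁ (rfl | rfl)
  · exact CentralBinomialHankel.det_gramMatrix_mul n₁
  · exact CentralBinomialHankel.det_gramMatrix_mul_add_one n₁
end
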